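/- (Poincaré inequality for mixed nonlocal boundary conditions) There exists a constant C = C(N, s, Ω, Σ1) > 0 such that ∫_Ω u² dx ≤ C ∬_Q |u(x) − u(y)|² / |x − y|^{N+2s} dx dy for every u ∈ E^s_{Σ1}. -/

import Mathlib

open MeasureTheory Set

noncomputable section

/-- Euclidean space ℝ^N. -/
abbrev Rn (N : ℕ) := EuclideanSpace ℝ (Fin N)

/-- The set Q := ℝ^{2N} \ ((ℝ^N \ Ω) × (ℝ^N \ Ω)). -/
def Qset (N : ℕ) (Ω : Set (Rn N)) : Set (Rn N × Rn N) :=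
  Set.univ \ (Ωᶜ ×ˢ Ωᶜ)

/-- The kernel (u(x)-u(y))(v(x)-v(y))/|x-y|^{N+2s}. -/
def frKer (N : ℕ) (s : ℝ) (u v : Rn N → ℝ) (p : Rn N × Rn N) : ℝ :=
  (u p.1 - u p.2) * (v p.1 - v p.2) / ‖p.1 - p.2‖ ^ ((N : ℝ) + 2 * s)

/-- Membership in the space E^s_{Σ₁}: measurable, vanishing a.e. on Σ₁,
with finite L²(Ω) norm and finite Gagliardo seminorm over Q. -/
def MemE (N : ℕ) (s : ℝ) (Ω S1 : Set (Rn N)) (u : Rn N → ℝ) : Prop :=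
  Measurable u ∧ (∀ᵐ x : Rn N, x ∈ S1 → u x = 0) ∧
  IntegrableOn (fun x => (u x) ^ 2) Ω ∧
  IntegrableOn (frKer N s u u) (Qset N Ω)

/-- Weak solution of the mixed problem (-Δ)^s u = f in Ω, u = 0 in Σ₁, 𝒩_s u = 0 in Σ₂. -/
def IsWeakSolMixed (N : ℕ) (s aNs : ℝ) (Ω S1 : Set (Rn N)) (f u : Rn N → ℝ) : Prop :=
  MemE N s Ω S1 u ∧ ∀ φ : Rn N → ℝ, MemE N s Ω S1 φ →
    (aNs / 2) * ∫ p in Qset N Ω, frKer N s u φ p = ∫ x in Ω, f x * φ x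

/-!
For `x ∈ Ω` and almost every `y ∈ Σ₁` the value `u y` vanishes, so `|u x|²` is the numerator of the
kernel at `(x, y)`. On a bounded piece `S ⊆ Σ₁` of positive measure the denominator is at most
`diam (Ω ∪ S) ^ (N + 2s)`; integrating over `Ω × S ⊆ Q` gives the inequality with constant
`diam (Ω ∪ S) ^ (N + 2s) / |S|`.
-/

theorem measureReal_univ_mul_integral_le_integral_prod {α β : Type*} [MeasurableSpace α]
    [MeasurableSpace β] {μ : Measure α} {ν : Measure β} [SFinite μ] [IsFiniteMeasure ν]
    {f : α → ℝ} {g : α × β → ℝ} (hf : Integrable f μ) (hg : Integrable g (μ.prod ν))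
    (hfg : ∀ᵐ p ∂μ.prod ν, f p.1 ≤ g p) :
    ν.real univ * ∫ x, f x ∂μ ≤ ∫ p, g p ∂μ.prod ν :=
  calc ν.real univ * ∫ x, f x ∂μ = ∫ p, f p.1 ∂μ.prod ν := (integral_fun_fst f).symm
    _ ≤ ∫ p, g p ∂μ.prod ν := integral_mono_ae (hf.comp_fst ν) hg hfg

theorem exists_subset_isBounded_measure_pos {α : Type*} [PseudoMetricSpace α] [MeasurableSpace α]
    [OpensMeasurableSpace α] {μ : Measure α} {A : Set α} (hA : 0 < μ A) :
    ∃ S ⊆ A, Bornology.IsBounded S ∧ 0 < μ S := by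
  obtain ⟨z, -⟩ := nonempty_of_measure_ne_zero hA.ne'
  obtain ⟨n, hn⟩ := exists_pos_ball z (Measure.restrict_eq_zero.not.mpr hA.ne')
  rw [Measure.restrict_apply measurableSet_ball] at hn
  exact ⟨Metric.ball z n ∩ A, inter_subset_right,
    Metric.isBounded_ball.subset inter_subset_left, hn⟩

section Kernel

variable {N : ℕ} {s : ℝ} {Ω S T : Set (Rn N)} {u : Rn N → ℝ}

theorem prod_subset_Qset : Ω ×ˢ S ⊆ Qset N Ω :=
  fun _ hp => ⟨mem_univ _, fun hp' => hp'.1 hp.1⟩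

theorem frKer_self_nonneg (p : Rn N × Rn N) : 0 ≤ frKer N s u u p :=
  div_nonneg (mul_self_nonneg _) (by positivity)

theorem sq_le_rpow_mul_frKer_self (hs : 0 ≤ (N : ℝ) + 2 * s) {D : ℝ} {p : Rn N × Rn N}
    (hu : u p.2 = 0) (hp : dist p.1 p.2 ≤ D) :
    u p.1 ^ 2 ≤ D ^ ((N : ℝ) + 2 * s) * frKer N s u u p := by
  rcases eq_or_ne p.1 p.2 with hdiag | hoff
  · simp [frKer, hdiag, hu]
  have hpos : 0 < ‖p.1 - p.2‖ := norm_sub_pos_iff.mpr hoff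
  rw [dist_eq_norm] at hp
  calc u p.1 ^ 2
      = ‖p.1 - p.2‖ ^ ((N : ℝ) + 2 * s) * frKer N s u u p := by
        rw [frKer, hu, sub_zero, mul_div_cancel₀ _ (by positivity), sq]
    _ ≤ D ^ ((N : ℝ) + 2 * s) * frKer N s u u p := by
        gcongr
        exact frKer_self_nonneg p

theorem MemE.mono (hu : MemE N s Ω T u) (hST : S ⊆ T) : MemE N s Ω S u :=
  ⟨hu.1, hu.2.1.mono fun _ hx hxS => hx (hST hxS), hu.2.2⟩

theorem MemE.ae_sq_le_diam_rpow_mul_frKer (hs : 0 ≤ (N : ℝ) + 2 * s)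
    (hΩ : Bornology.IsBounded Ω) (hS : Bornology.IsBounded S) (hu : MemE N s Ω S u) :
    ∀ᵐ p ∂(volume.restrict Ω).prod (volume.restrict S),
      u p.1 ^ 2 ≤ Metric.diam (Ω ∪ S) ^ ((N : ℝ) + 2 * s) * frKer N s u u p := by
  obtain ⟨hum, hu0, -, -⟩ := hu
  have hvanish : ∀ᵐ p ∂(volume.restrict Ω).prod (volume.restrict S), u p.2 = 0 :=
    Measure.quasiMeasurePreserving_snd.ae <|
      (ae_restrict_iff (hum (measurableSet_singleton 0))).mpr hu0
  have hdist : ∀ᵐ p ∂(volume.restrict Ω).prod (volume.restrict S),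
      dist p.1 p.2 ≤ Metric.diam (Ω ∪ S) := by
    rw [Measure.prod_restrict, ae_restrict_iff (measurableSet_le (by fun_prop) (by fun_prop))]
    exact ae_of_all _ fun p hp =>
      Metric.dist_le_diam_of_mem (hΩ.union hS) (Or.inl hp.1) (Or.inr hp.2)
  filter_upwards [hvanish, hdist] with p hup hp
  exact sq_le_rpow_mul_frKer_self hs hup hp

theorem MemE.measureReal_mul_setIntegral_sq_le (hs : 0 ≤ (N : ℝ) + 2 * s)
    (hΩ : Bornology.IsBounded Ω) (hS : Bornology.IsBounded S) (hu : MemE N s Ω S u) :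
    volume.real S * ∫ x in Ω, u x ^ 2 ≤
      Metric.diam (Ω ∪ S) ^ ((N : ℝ) + 2 * s) * ∫ p in Qset N Ω, frKer N s u u p := by
  have hbound := hu.ae_sq_le_diam_rpow_mul_frKer hs hΩ hS
  obtain ⟨-, -, husq, hker⟩ := hu
  have hkerΩS : Integrable (frKer N s u u) ((volume.restrict Ω).prod (volume.restrict S)) := by
    rw [Measure.prod_restrict]
    exact hker.mono_set prod_subset_Qset
  have : IsFiniteMeasure (volume.restrict S) :=
    isFiniteMeasure_restrict.mpr hS.measure_lt_top.ne
  calc volume.real S * ∫ x in Ω, u x ^ 2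
      = (volume.restrict S).real univ * ∫ x in Ω, u x ^ 2 := by
        rw [measureReal_restrict_apply_univ]
    _ ≤ ∫ p, Metric.diam (Ω ∪ S) ^ ((N : ℝ) + 2 * s) * frKer N s u u p
          ∂(volume.restrict Ω).prod (volume.restrict S) :=
        measureReal_univ_mul_integral_le_integral_prod husq (hkerΩS.const_mul _) hbound
    _ = Metric.diam (Ω ∪ S) ^ ((N : ℝ) + 2 * s) * ∫ p in Ω ×ˢ S, frKer N s u u p := by
        rw [integral_const_mul, Measure.prod_restrict, Measure.volume_eq_prod]
    _ ≤ Metric.diam (Ω ∪ S) ^ ((N : ℝ) + 2 * s) * ∫ p in Qset N Ω, frKer N s u u p :=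
        mul_le_mul_of_nonneg_left
          (setIntegral_mono_set hker (ae_of_all _ frKer_self_nonneg) prod_subset_Qset.eventuallyLE)
          (by positivity)

end Kernel

theorem poincare_inequality_mixed_general {N : ℕ} {s : ℝ} (hs : 0 ≤ (N : ℝ) + 2 * s)
    {Ω S1 : Set (Rn N)} (hΩ : Bornology.IsBounded Ω) (hS1 : 0 < volume S1) :
    ∃ C : ℝ, 0 < C ∧ ∀ u : Rn N → ℝ, MemE N s Ω S1 u →
      (∫ x in Ω, (u x) ^ 2) ≤ C * ∫ p in Qset N Ω, frKer N s u u p := by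
  obtain ⟨S, hSS1, hS, hSpos⟩ := exists_subset_isBounded_measure_pos hS1
  have hvol : 0 < volume.real S := ENNReal.toReal_pos hSpos.ne' hS.measure_lt_top.ne
  set K : ℝ := Metric.diam (Ω ∪ S) ^ ((N : ℝ) + 2 * s) / volume.real S with hK
  -- For `N = 0 < s` the diameter, hence `K`, is `0`.
  refine ⟨K + 1, by positivity, fun u hu => ?_⟩
  calc ∫ x in Ω, u x ^ 2
      ≤ K * ∫ p in Qset N Ω, frKer N s u u p := by
        rw [hK, div_mul_eq_mul_div, le_div_iff₀' hvol]
        exact (hu.mono hSS1).measureReal_mul_setIntegral_sq_le hs hΩ hS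
    _ ≤ (K + 1) * ∫ p in Qset N Ω, frKer N s u u p := by
        gcongr
        · exact integral_nonneg frKer_self_nonneg
        · exact le_add_of_nonneg_right zero_le_one

/-- Poincaré inequality for the space E^s_{Σ₁} with mixed nonlocal boundary
conditions. -/
theorem poincare_inequality_mixed
    {N : ℕ} (hN : 1 ≤ N) {s : ℝ} (hs0 : 0 < s) (hs1 : s < 1)
    {Ω S1 S2 : Set (Rn N)} (hΩo : IsOpen Ω) (hΩb : Bornology.IsBounded Ω)
    (hΩc : IsConnected Ω)
    (hS1o : IsOpen S1) (hS2o : IsOpen S2)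
    (hS1m : 0 < volume S1) (hS2m : 0 < volume S2)
    (hdisj : Disjoint S1 S2) (hcov : closure S1 ∪ closure S2 = Ωᶜ) :
    ∃ C : ℝ, 0 < C ∧ ∀ u : Rn N → ℝ, MemE N s Ω S1 u →
      (∫ x in Ω, (u x) ^ 2) ≤ C * ∫ p in Qset N Ω, frKer N s u u p := by
  exact poincare_inequality_mixed_general (by positivity) hΩb hS1m
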